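/- Let d > 4 be an integer and let σ² ∈ (0,∞). Define G : ℤ^d → [0,∞) by G(z) = (σ²/2)·(g⋆g)(z) + (1 − σ²/2)·g(z) + (1 − σ²/2)·(1/(2d))·Σ_{e∈ℤ^d, ‖e‖=1} g(z+e). Then there is a constant c_G > 0, depending only on d and σ², such that for every ε > 0 one has G(z) = c_G·‖z‖^{−(d−4)} + o(‖z‖^{−(d−2−ε)}) as ‖z‖ → ∞; that is, ‖z‖^{d−2−ε}·(G(z) − c_G·‖z‖^{−(d−4)}) → 0 as ‖z‖ → ∞. -/

import Mathlib

/-!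
The proof passes to continuous time. If `ctK d z t = ∑ₖ e^{-t} t^k/k! · P(X_k = z)` is the kernel of
the rate-one continuous-time walk, then, since `∫₀^∞ t e^{-t} t^k/k! dt = k + 1` and
`g ⋆ g = ∑ₖ (k+1) P(X_k = ·)`, one has exactly `g(z) = ∫ ctK d z t dt` and
`(g ⋆ g)(z) = ∫ t · ctK d z t dt` (`green_eq_lintegral`, `convE_green_eq_lintegral`).

The coordinates of the continuous-time walk are independent, so `ctK` is a product of
one-dimensional kernels (`ctK_eq_prod`, proved by Fourier inversion). Comparing Fourier integrals in
one dimension gives the uniform local limit theorem `t |ctK - heatG| ≤ C t^{-d/2}`, where `heatG` is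
the Gaussian density of covariance `(t/d) I` (`local_limit`). An exponential Chebyshev bound shows
that `ctK`, like `heatG`, is at most `C_N ((1+t)/‖z‖²)^N` for every large `N` (`ctK_decay`,
`heatG_decay`). Cutting the time integral at `t = ‖z‖^{2-δ}` then yields
`g(z) = O(‖z‖^{2-d+ε})` and `(g ⋆ g)(z) = ∫ t · heatG d z t dt + O(‖z‖^{2-d+ε})` for every `ε > 0`
(`split_bound`, `green_bound`, `conv_bound`), and by scaling the last integral is exactly a positive
constant times `‖z‖^{-(d-4)}` (`heatG_integral`). The neighbour sum in `G` is at most `2d · g(z)`.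
-/

open Filter

noncomputable section

/-- `srwP d k x` is the probability that the simple random walk on `ℤ^d`
started at `0` is at `x` at time `k`. -/
def srwP (d : ℕ) : ℕ → (Fin d → ℤ) → ENNReal
  | 0, x => if x = 0 then 1 else 0
  | k + 1, x =>
      (2 * d : ENNReal)⁻¹ *
        ∑ i : Fin d, (srwP d k (x - Pi.single i 1) + srwP d k (x + Pi.single i 1))

/-- The Euclidean norm on `ℤ^d`. -/
def nrmZ (d : ℕ) (x : Fin d → ℤ) : ℝ := Real.sqrt (∑ i, ((x i : ℝ)) ^ 2)

/-- The Green's function of the simple random walk on `ℤ^d`. -/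
def green (d : ℕ) (x : Fin d → ℤ) : ENNReal := ∑' k : ℕ, srwP d k x

/-- Convolution of two `[0,∞]`-valued functions on `ℤ^d`. -/
def convE (d : ℕ) (f h : (Fin d → ℤ) → ENNReal) (z : Fin d → ℤ) : ENNReal :=
  ∑' x, f x * h (z - x)

/-- The function `G(z) = (σ²/2)(g⋆g)(z) + (1−σ²/2) g(z) + (1−σ²/2)(2d)⁻¹ Σ_{‖e‖=1} g(z+e)`. -/
def Gfun (d : ℕ) (σ2 : ℝ) (z : Fin d → ℤ) : ℝ :=
  σ2 / 2 * (convE d (green d) (green d) z).toReal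
    + (1 - σ2 / 2) * (green d z).toReal
    + (1 - σ2 / 2) * (1 / (2 * (d : ℝ))) *
        ∑' e : Fin d → ℤ, (if nrmZ d e = 1 then (green d (z + e)).toReal else 0)

open MeasureTheory

/-! ### The walk over the reals and the Poissonised kernel -/

/-- Real-valued version of `srwP`. -/
def rwP (d : ℕ) : ℕ → (Fin d → ℤ) → ℝ
  | 0, x => if x = 0 then 1 else 0
  | k + 1, x =>
      (2 * d : ℝ)⁻¹ * ∑ i : Fin d, (rwP d k (x - Pi.single i 1) + rwP d k (x + Pi.single i 1))

lemma rwP_nonneg (d k : ℕ) (x : Fin d → ℤ) : 0 ≤ rwP d k x := by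
  induction k generalizing x with
  | zero => simp only [rwP]; split_ifs <;> norm_num
  | succ k ih =>
    simp only [rwP]
    exact mul_nonneg (by positivity) (Finset.sum_nonneg fun i _ => add_nonneg (ih _) (ih _))

lemma srwP_eq_ofReal (d : ℕ) (hd : 0 < d) (k : ℕ) (x : Fin d → ℤ) :
    srwP d k x = ENNReal.ofReal (rwP d k x) := by
  induction k generalizing x with
  | zero => simp only [rwP, srwP]; split_ifs <;> simp
  | succ k ih =>
    have hd' : (0 : ℝ) < 2 * d := by positivity
    simp only [rwP, srwP, ih]
    rw [ENNReal.ofReal_mul (by positivity), ENNReal.ofReal_inv_of_pos hd',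
      ENNReal.ofReal_sum_of_nonneg (fun i _ => add_nonneg (rwP_nonneg _ _ _) (rwP_nonneg _ _ _)),
      ENNReal.ofReal_mul (by norm_num)]
    simp [ENNReal.ofReal_add, rwP_nonneg]

lemma srwP_semigroup (d j k : ℕ) (z : Fin d → ℤ) :
    ∑' x, srwP d j x * srwP d k (z - x) = srwP d (j + k) z := by
  induction j generalizing z with
  | zero =>
    rw [tsum_eq_single 0]
    · simp [srwP]
    · intro x hx; simp [srwP, hx]
  | succ j ih =>
    have hsub : ∀ i : Fin d, ∑' x, srwP d j (x - Pi.single i 1) * srwP d k (z - x)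
        = srwP d (j + k) (z - Pi.single i 1) := by
      intro i
      rw [← ih, ← (Equiv.addRight (Pi.single i 1 : Fin d → ℤ)).tsum_eq]
      refine tsum_congr fun x => ?_
      simp [sub_sub, add_comm]
    have hadd : ∀ i : Fin d, ∑' x, srwP d j (x + Pi.single i 1) * srwP d k (z - x)
        = srwP d (j + k) (z + Pi.single i 1) := by
      intro i
      rw [← ih, ← (Equiv.subRight (Pi.single i 1 : Fin d → ℤ)).tsum_eq]
      refine tsum_congr fun x => ?_
      simp [sub_sub_eq_add_sub]
    have : ∀ x, srwP d (j + 1) x * srwP d k (z - x) = (2 * d : ENNReal)⁻¹ *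
        ∑ i : Fin d, (srwP d j (x - Pi.single i 1) * srwP d k (z - x)
          + srwP d j (x + Pi.single i 1) * srwP d k (z - x)) := by
      intro x
      simp only [srwP, mul_assoc, Finset.sum_mul, add_mul]
    simp only [this]
    rw [ENNReal.tsum_mul_left, Summable.tsum_finsetSum (fun _ _ => ENNReal.summable)]
    simp only [ENNReal.tsum_add, hsub, hadd]
    rw [show j + 1 + k = (j + k) + 1 by ring, srwP]

lemma convE_green (d : ℕ) (z : Fin d → ℤ) :
    convE d (green d) (green d) z = ∑' n : ℕ, ((n : ENNReal) + 1) * srwP d n z := by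
  have h1 : convE d (green d) (green d) z = ∑' j : ℕ, ∑' k : ℕ, srwP d (j + k) z := by
    simp only [convE, green, ← srwP_semigroup]
    calc ∑' x, (∑' j, srwP d j x) * (∑' k, srwP d k (z - x))
        = ∑' x, ∑' j, ∑' k, srwP d j x * srwP d k (z - x) := by
          refine tsum_congr fun x => ?_
          rw [← ENNReal.tsum_mul_right]
          exact tsum_congr fun j => ENNReal.tsum_mul_left.symm
      _ = _ := by
          rw [ENNReal.tsum_comm]
          exact tsum_congr fun j => ENNReal.tsum_comm
  rw [h1, ← ENNReal.tsum_prod (f := fun j k => srwP d (j + k) z),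
    ← Finset.HasAntidiagonal.sigmaAntidiagonalEquivProd.tsum_eq, ENNReal.tsum_sigma']
  refine tsum_congr fun n => ?_
  rw [tsum_fintype]
  have : ∀ b : Finset.HasAntidiagonal.antidiagonal n, srwP d ((b : ℕ × ℕ).1 + (b : ℕ × ℕ).2) z = srwP d n z := by
    intro b; rw [Finset.HasAntidiagonal.mem_antidiagonal.1 b.2]
  simp [this]

/-- Poisson weight `e^{-t} t^k / k!`. -/
def poisW (t : ℝ) (k : ℕ) : ℝ := Real.exp (-t) * (t ^ k / (k.factorial : ℝ))

/-- Transition probability from `0` to `z` in time `t` of the rate-one continuous-time walk. -/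
def ctK (d : ℕ) (z : Fin d → ℤ) (t : ℝ) : ℝ := ∑' k : ℕ, poisW t k * rwP d k z

lemma poisW_nonneg {t : ℝ} (ht : 0 ≤ t) (k : ℕ) : 0 ≤ poisW t k := by
  unfold poisW; positivity

/-- Exponential Chebyshev bound: `e^{-l x_i}` is an eigenfunction of the one-step kernel, with
eigenvalue `1 + (cosh l - 1)/d`. -/
lemma rwP_chernoff (d : ℕ) (hd : 0 < d) (i : Fin d) (l : ℝ) (k : ℕ) (x : Fin d → ℤ) :
    rwP d k x ≤ Real.exp (-(l * x i)) * (1 + (Real.cosh l - 1) / d) ^ k := by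
  have hd' : (0 : ℝ) < d := by exact_mod_cast hd
  induction k generalizing x with
  | zero =>
    simp only [rwP]; split_ifs with h
    · subst h; simp
    · positivity
  | succ k ih =>
    set M := 1 + (Real.cosh l - 1) / d with hM
    have key : ∀ j : Fin d, rwP d k (x - Pi.single j 1) + rwP d k (x + Pi.single j 1)
        ≤ Real.exp (-(l * x i)) * M ^ k * (if j = i then 2 * Real.cosh l else 2) := by
      intro j
      refine (add_le_add (ih _) (ih _)).trans (le_of_eq ?_)
      by_cases h : j = i
      · subst h
        simp only [Pi.sub_apply, Pi.add_apply, Pi.single_eq_same, if_true]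
        push_cast
        rw [show -(l * ((x j : ℝ) - 1)) = -(l * x j) + l by ring,
          show -(l * ((x j : ℝ) + 1)) = -(l * x j) + -l by ring, Real.exp_add, Real.exp_add,
          Real.cosh_eq]
        ring
      · have : (Pi.single j (1 : ℤ) : Fin d → ℤ) i = 0 := Pi.single_eq_of_ne (Ne.symm h) _
        simp only [Pi.sub_apply, Pi.add_apply, this, h, if_false, sub_zero, add_zero]
        ring
    simp only [rwP]
    calc _ ≤ (2 * d : ℝ)⁻¹ * ∑ j : Fin d,
          Real.exp (-(l * x i)) * M ^ k * (if j = i then 2 * Real.cosh l else 2) := by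
          gcongr with j; exact key j
      _ = _ := by
        rw [← Finset.mul_sum]
        have : ∑ j : Fin d, (if j = i then 2 * Real.cosh l else 2) = 2 * d * M := by
          have : ∀ j : Fin d, (if j = i then 2 * Real.cosh l else 2)
              = 2 + (if j = i then 2 * Real.cosh l - 2 else 0) := by
            intro j; split_ifs <;> ring
          simp only [this, Finset.sum_add_distrib]
          simp [hM]
          field_simp
        rw [this, pow_succ]
        field_simp

lemma rwP_le_one (d : ℕ) (hd : 0 < d) (k : ℕ) (x : Fin d → ℤ) : rwP d k x ≤ 1 := by
  simpa using rwP_chernoff d hd ⟨0, hd⟩ 0 k x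

lemma hasSum_poisW_mul_pow (t M : ℝ) :
    HasSum (fun k => poisW t k * M ^ k) (Real.exp (t * (M - 1))) := by
  have h := (NormedSpace.expSeries_div_hasSum_exp (t * M : ℝ)).mul_left (Real.exp (-t))
  rw [← Real.exp_eq_exp_ℝ, ← Real.exp_add] at h
  have e : t * (M - 1) = -t + t * M := by ring
  rw [e]
  have e' : (fun k => poisW t k * M ^ k)
      = fun k => Real.exp (-t) * ((t * M) ^ k / (k.factorial : ℝ)) := by
    ext k; simp only [poisW, mul_pow]; ring
  rwa [e']

lemma summable_ctK (d : ℕ) (hd : 0 < d) (z : Fin d → ℤ) {t : ℝ} (ht : 0 ≤ t) :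
    Summable fun k => poisW t k * rwP d k z := by
  refine Summable.of_nonneg_of_le
    (fun k => mul_nonneg (poisW_nonneg ht k) (rwP_nonneg _ _ _)) (fun k => ?_)
    (hasSum_poisW_mul_pow t 1).summable
  rw [one_pow]
  exact mul_le_mul_of_nonneg_left (rwP_le_one d hd k z) (poisW_nonneg ht k)

lemma ctK_nonneg (d : ℕ) (z : Fin d → ℤ) {t : ℝ} (ht : 0 ≤ t) : 0 ≤ ctK d z t :=
  tsum_nonneg fun k => mul_nonneg (poisW_nonneg ht k) (rwP_nonneg _ _ _)

lemma ctK_chernoff (d : ℕ) (hd : 0 < d) (z : Fin d → ℤ) {t : ℝ} (ht : 0 ≤ t) (i : Fin d) (l : ℝ) :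
    ctK d z t ≤ Real.exp (-(l * z i)) * Real.exp (t * ((Real.cosh l - 1) / d)) := by
  have h := (hasSum_poisW_mul_pow t (1 + (Real.cosh l - 1) / d)).mul_left (Real.exp (-(l * z i)))
  rw [add_sub_cancel_left] at h
  rw [← h.tsum_eq]
  refine Summable.tsum_le_tsum (fun k => ?_) (summable_ctK d hd z ht) h.summable
  calc _ ≤ poisW t k * (Real.exp (-(l * z i)) * (1 + (Real.cosh l - 1) / d) ^ k) :=
        mul_le_mul_of_nonneg_left (rwP_chernoff d hd i l k z) (poisW_nonneg ht k)
    _ = _ := by ring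

lemma measurable_ctK (d : ℕ) (hd : 0 < d) (z : Fin d → ℤ) :
    AEMeasurable (ctK d z) (volume.restrict (Set.Ioi 0)) := by
  have h : Measurable fun t : ℝ => (∑' k, ENNReal.ofReal (poisW t k * rwP d k z)).toReal := by
    refine Measurable.ennreal_toReal (Measurable.tsum fun k => ?_)
    unfold poisW
    fun_prop
  refine h.aemeasurable.congr ?_
  filter_upwards [ae_restrict_mem measurableSet_Ioi] with t ht
  have ht' : (0 : ℝ) ≤ t := le_of_lt ht
  rw [← ENNReal.ofReal_tsum_of_nonneg
    (fun k => mul_nonneg (poisW_nonneg ht' k) (rwP_nonneg _ _ _)) (summable_ctK d hd z ht')]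
  exact ENNReal.toReal_ofReal (ctK_nonneg d z ht')

lemma lintegral_poisW (k m : ℕ) :
    ∫⁻ t in Set.Ioi (0 : ℝ), ENNReal.ofReal (t ^ m * poisW t k)
      = ENNReal.ofReal (((k + m).factorial : ℝ) / k.factorial) := by
  have hs : (0 : ℝ) < ((k + m : ℕ) : ℝ) + 1 := by positivity
  have e : ∀ t : ℝ, t ^ m * poisW t k
      = (k.factorial : ℝ)⁻¹ * (Real.exp (-t) * t ^ ((((k + m : ℕ) : ℝ) + 1) - 1)) := by
    intro t
    rw [add_sub_cancel_right, Real.rpow_natCast]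
    unfold poisW; rw [pow_add]; field_simp
  simp only [e]
  rw [← ofReal_integral_eq_lintegral_ofReal, integral_const_mul, ← Real.Gamma_eq_integral hs,
    Real.Gamma_nat_eq_factorial]
  · congr 1; field_simp
  · exact (Real.GammaIntegral_convergent hs).const_mul _
  · filter_upwards [ae_restrict_mem measurableSet_Ioi] with t ht
    have : (0 : ℝ) < t := ht
    positivity

/-- The Gamma integral `∫ t^m e^{-t} t^k / k! dt = (k+m)!/k!` gives weight `1` to step `k` for
`m = 0` (hence `g`) and weight `k + 1` for `m = 1` (hence `g ⋆ g`). -/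
lemma lintegral_ctK (d : ℕ) (hd : 0 < d) (z : Fin d → ℤ) (m : ℕ) :
    ∫⁻ t in Set.Ioi (0 : ℝ), ENNReal.ofReal (t ^ m * ctK d z t)
      = ∑' k : ℕ, ENNReal.ofReal (((k + m).factorial : ℝ) / k.factorial) * srwP d k z := by
  have : ∫⁻ t in Set.Ioi (0 : ℝ), ENNReal.ofReal (t ^ m * ctK d z t)
      = ∫⁻ t in Set.Ioi (0 : ℝ), ∑' k, ENNReal.ofReal (t ^ m * poisW t k) * srwP d k z := by
    refine setLIntegral_congr_fun measurableSet_Ioi fun t ht => ?_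
    have ht' : (0 : ℝ) ≤ t := le_of_lt ht
    simp only [ctK]
    rw [ENNReal.ofReal_mul (by positivity), ENNReal.ofReal_tsum_of_nonneg
      (fun k => mul_nonneg (poisW_nonneg ht' k) (rwP_nonneg _ _ _)) (summable_ctK d hd z ht'),
      ← ENNReal.tsum_mul_left]
    refine tsum_congr fun k => ?_
    rw [srwP_eq_ofReal d hd, ENNReal.ofReal_mul (poisW_nonneg ht' k),
      ENNReal.ofReal_mul (p := t ^ m) (by positivity), mul_assoc]
  rw [this, lintegral_tsum]
  · refine tsum_congr fun k => ?_
    rw [lintegral_mul_const _ (by unfold poisW; fun_prop), lintegral_poisW]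
  · intro k; unfold poisW; fun_prop

lemma green_eq_lintegral (d : ℕ) (hd : 0 < d) (z : Fin d → ℤ) :
    green d z = ∫⁻ t in Set.Ioi (0 : ℝ), ENNReal.ofReal (ctK d z t) := by
  have h := lintegral_ctK d hd z 0
  simp only [pow_zero, one_mul, add_zero] at h
  rw [h, green]
  refine tsum_congr fun k => ?_
  rw [div_self (by positivity)]; simp

lemma convE_green_eq_lintegral (d : ℕ) (hd : 0 < d) (z : Fin d → ℤ) :
    convE d (green d) (green d) z
      = ∫⁻ t in Set.Ioi (0 : ℝ), ENNReal.ofReal (t * ctK d z t) := by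
  have h := lintegral_ctK d hd z 1
  simp only [pow_one] at h
  rw [h, convE_green]
  refine tsum_congr fun k => ?_
  congr 1
  rw [Nat.factorial_succ]; push_cast
  rw [mul_div_assoc, div_self (by positivity), mul_one,
    ENNReal.ofReal_add (by positivity) (by norm_num)]
  simp

/-! ### Fourier representation -/

/-- Lebesgue measure on the period `(-π, π]`, of total mass `2π`. -/
def perM : Measure ℝ := volume.restrict (Set.Ioc (-Real.pi) Real.pi)

instance : IsFiniteMeasure perM := by unfold perM; infer_instance

/-- Character `θ ↦ e^{i z·θ}`. -/
def chr (d : ℕ) (z : Fin d → ℤ) (θ : Fin d → ℝ) : ℂ :=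
  ∏ i, Complex.exp (Complex.I * (z i : ℂ) * (θ i : ℂ))

/-- Characteristic function of one step of the walk. -/
def phi (d : ℕ) (θ : Fin d → ℝ) : ℝ := (d : ℝ)⁻¹ * ∑ i, Real.cos (θ i)

lemma norm_chr (d : ℕ) (z : Fin d → ℤ) (θ : Fin d → ℝ) : ‖chr d z θ‖ = 1 := by
  unfold chr
  rw [norm_prod]
  refine Finset.prod_eq_one fun i _ => ?_
  rw [show Complex.I * (z i : ℂ) * (θ i : ℂ) = (((z i : ℝ) * θ i : ℝ) : ℂ) * Complex.I by
    push_cast; ring]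
  exact Complex.norm_exp_ofReal_mul_I _

lemma continuous_chr (d : ℕ) (z : Fin d → ℤ) : Continuous (chr d z) := by
  unfold chr; fun_prop

lemma continuous_phi (d : ℕ) : Continuous (phi d) := by
  unfold phi; fun_prop

lemma abs_phi_le (d : ℕ) (θ : Fin d → ℝ) : |phi d θ| ≤ 1 := by
  unfold phi
  rw [abs_mul, abs_of_nonneg (by positivity : (0 : ℝ) ≤ (d : ℝ)⁻¹)]
  have : |∑ i, Real.cos (θ i)| ≤ d := by
    refine (Finset.abs_sum_le_sum_abs _ _).trans ?_
    refine (Finset.sum_le_sum fun i _ => Real.abs_cos_le_one (θ i)).trans ?_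
    simp
  calc (d : ℝ)⁻¹ * |∑ i, Real.cos (θ i)| ≤ (d : ℝ)⁻¹ * d := by gcongr
    _ ≤ 1 := inv_mul_le_one

lemma chr_single (d : ℕ) (z : Fin d → ℤ) (j : Fin d) (a : ℤ) (θ : Fin d → ℝ) :
    chr d (z + Pi.single j a) θ = chr d z θ * Complex.exp (Complex.I * a * θ j) := by
  have : Complex.exp (Complex.I * a * θ j)
      = ∏ i, Complex.exp (Complex.I * ((Pi.single j a : Fin d → ℤ) i : ℂ) * (θ i : ℂ)) := by
    rw [Finset.prod_eq_single j]
    · simp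
    · intro i _ hi; simp [Pi.single_eq_of_ne hi]
    · simp
  rw [this]
  unfold chr
  rw [← Finset.prod_mul_distrib]
  refine Finset.prod_congr rfl fun i _ => ?_
  rw [← Complex.exp_add]
  congr 1
  simp only [Pi.add_apply]; push_cast; ring

lemma phi_mul_chr (d : ℕ) (z : Fin d → ℤ) (θ : Fin d → ℝ) :
    (phi d θ : ℂ) * chr d z θ = (2 * d : ℂ)⁻¹ *
      ∑ i, (chr d (z - Pi.single i 1) θ + chr d (z + Pi.single i 1) θ) := by
  have h : ∀ i, chr d (z - Pi.single i 1) θ + chr d (z + Pi.single i 1) θ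
      = 2 * (Complex.cos (θ i) * chr d z θ) := by
    intro i
    rw [sub_eq_add_neg, ← Pi.single_neg, chr_single, chr_single, Complex.cos]
    push_cast
    rw [show Complex.I * -1 * (θ i : ℂ) = -(θ i : ℂ) * Complex.I by ring,
      show Complex.I * 1 * (θ i : ℂ) = (θ i : ℂ) * Complex.I by ring]
    ring
  simp only [h, phi]
  push_cast
  rw [← Finset.mul_sum, ← Finset.sum_mul, mul_inv]
  ring

lemma integral_char (n : ℤ) :
    ∫ x, Complex.exp (Complex.I * n * x) ∂perM = if n = 0 then 2 * (Real.pi : ℂ) else 0 := by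
  unfold perM
  rw [← intervalIntegral.integral_of_le (by linarith [Real.pi_pos])]
  split_ifs with h
  · subst h; simp; ring
  · rw [integral_exp_mul_complex (by simp [h])]
    have : Complex.exp (Complex.I * n * (Real.pi : ℂ))
        = Complex.exp (Complex.I * n * ((-Real.pi : ℝ) : ℂ)) := by
      rw [Complex.exp_eq_exp_iff_exists_int]
      exact ⟨n, by push_cast; ring⟩
    rw [this]; simp

lemma integrable_phi_chr (d k : ℕ) (z : Fin d → ℤ) :
    Integrable (fun θ => (phi d θ : ℂ) ^ k * chr d z θ) (Measure.pi fun _ : Fin d => perM) := by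
  have hc : Continuous fun θ => (phi d θ : ℂ) ^ k * chr d z θ := by
    have := continuous_phi d; have := continuous_chr d z; fun_prop
  refine Integrable.of_bound hc.aestronglyMeasurable 1 (ae_of_all _ fun θ => ?_)
  rw [norm_mul, norm_chr, mul_one, norm_pow, Complex.norm_real]
  exact pow_le_one₀ (norm_nonneg _) (abs_phi_le d θ)

lemma rwP_fourier (d k : ℕ) (z : Fin d → ℤ) :
    ∫ θ, (phi d θ : ℂ) ^ k * chr d z θ ∂(Measure.pi fun _ : Fin d => perM)
      = (2 * (Real.pi : ℂ)) ^ d * (rwP d k z : ℂ) := by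
  induction k generalizing z with
  | zero =>
    simp only [pow_zero, one_mul, chr, rwP]
    rw [integral_fintype_prod_eq_prod (f := fun (i : Fin d) (x : ℝ) =>
      Complex.exp (Complex.I * (z i : ℂ) * (x : ℂ)))]
    simp only [integral_char]
    split_ifs with h
    · subst h; simp
    · obtain ⟨i, hi⟩ := Function.ne_iff.1 h
      rw [Finset.prod_eq_zero (Finset.mem_univ i) (by simpa using hi)]; simp
  | succ k ih =>
    have : ∀ θ, (phi d θ : ℂ) ^ (k + 1) * chr d z θ = (2 * d : ℂ)⁻¹ *
        ∑ i, ((phi d θ : ℂ) ^ k * chr d (z - Pi.single i 1) θ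
          + (phi d θ : ℂ) ^ k * chr d (z + Pi.single i 1) θ) := by
      intro θ
      rw [pow_succ, mul_assoc, phi_mul_chr, mul_left_comm, Finset.mul_sum]
      simp only [mul_add]
    simp only [this]
    rw [integral_const_mul, integral_finsetSum]
    swap
    · exact fun i _ => (integrable_phi_chr d k _).add (integrable_phi_chr d k _)
    simp only [integral_add (integrable_phi_chr d k _) (integrable_phi_chr d k _), ih, rwP]
    push_cast
    simp only [← mul_add, ← Finset.mul_sum]
    ring

/-- Transition probability from `0` to `n` in time `s` of the one-dimensional rate-one
continuous-time walk, defined as a Fourier coefficient (hence complex-valued). -/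
def ker1 (s : ℝ) (n : ℤ) : ℂ :=
  (2 * (Real.pi : ℂ))⁻¹ *
    ∫ x, Complex.exp (-(s * (1 - Real.cos x) : ℝ)) * Complex.exp (Complex.I * n * x) ∂perM

/-- Poissonisation decouples the coordinates: `e^{-t(1-φ(θ))}` is a product over the `θ i`. -/
lemma ctK_eq_prod (d : ℕ) (hd : 0 < d) (z : Fin d → ℤ) {t : ℝ} (ht : 0 ≤ t) :
    (ctK d z t : ℂ) = ∏ i, ker1 (t / d) (z i) := by
  have hd' : (d : ℝ) ≠ 0 := by positivity
  have hpi : (2 * (Real.pi : ℂ)) ^ d ≠ 0 :=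
    pow_ne_zero _ (mul_ne_zero two_ne_zero (by exact_mod_cast Real.pi_ne_zero))
  set μ : Measure (Fin d → ℝ) := Measure.pi fun _ : Fin d => perM with hμ
  set F : ℕ → (Fin d → ℝ) → ℂ := fun k θ => (poisW t k : ℂ) * ((phi d θ : ℂ) ^ k * chr d z θ)
  have hF : ∀ k, Integrable (F k) μ := fun k => (integrable_phi_chr d k z).const_mul _
  have hFn : ∀ k θ, ‖F k θ‖ ≤ poisW t k := by
    intro k θ
    simp only [F]
    rw [norm_mul, norm_mul, norm_chr, mul_one, norm_pow, Complex.norm_real, Complex.norm_real,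
      Real.norm_of_nonneg (poisW_nonneg ht k)]
    exact mul_le_of_le_one_right (poisW_nonneg ht k)
      (pow_le_one₀ (norm_nonneg _) (abs_phi_le d θ))
  have hsw : Summable (poisW t) := by simpa using (hasSum_poisW_mul_pow t 1).summable
  have hs : Summable fun k => ∫ θ, ‖F k θ‖ ∂μ := by
    refine Summable.of_nonneg_of_le (fun k => integral_nonneg fun _ => norm_nonneg _) (fun k => ?_)
      (hsw.mul_right (μ.real Set.univ))
    calc ∫ θ, ‖F k θ‖ ∂μ ≤ ∫ _θ, poisW t k ∂μ :=
          integral_mono (hF k).norm (integrable_const _) (hFn k)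
      _ = _ := by simp [mul_comm]
  have h1 := (hasSum_integral_of_summable_integral_norm hF hs).tsum_eq
  have h2 : ∑' k, ∫ θ, F k θ ∂μ = (2 * (Real.pi : ℂ)) ^ d * (ctK d z t : ℂ) := by
    have : ∀ k, ∫ θ, F k θ ∂μ
        = (2 * (Real.pi : ℂ)) ^ d * ((poisW t k * rwP d k z : ℝ) : ℂ) := by
      intro k
      simp only [F]
      rw [integral_const_mul, hμ, rwP_fourier]; push_cast; ring
    simp only [this]
    rw [tsum_mul_left, ctK, Complex.ofReal_tsum]
  have h3 : ∀ θ, ∑' k, F k θ = ∏ i, (Complex.exp (-((t / d) * (1 - Real.cos (θ i)) : ℝ)) *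
      Complex.exp (Complex.I * (z i : ℂ) * (θ i : ℂ))) := by
    intro θ
    have e1 : ∀ k, F k θ = ((poisW t k * phi d θ ^ k : ℝ) : ℂ) * chr d z θ := by
      intro k; simp only [F]; push_cast; ring
    simp only [e1]
    rw [tsum_mul_right, ← Complex.ofReal_tsum, (hasSum_poisW_mul_pow t _).tsum_eq,
      Finset.prod_mul_distrib, chr]
    congr 1
    rw [← Complex.exp_sum, Complex.ofReal_exp]
    congr 1
    have e2 : t * (phi d θ - 1) = ∑ i, -((t / d) * (1 - Real.cos (θ i))) := by
      simp only [phi, Finset.sum_neg_distrib, ← Finset.mul_sum, Finset.sum_sub_distrib]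
      simp
      field_simp
      ring
    rw [e2]; push_cast; rfl
  rw [h2] at h1
  simp only [h3] at h1
  rw [hμ, integral_fintype_prod_eq_prod (f := fun (i : Fin d) (x : ℝ) =>
    Complex.exp (-((t / d) * (1 - Real.cos x) : ℝ)) *
      Complex.exp (Complex.I * (z i : ℂ) * (x : ℂ)))] at h1
  simp only [ker1]
  rw [Finset.prod_mul_distrib, ← h1]
  simp only [Finset.prod_const, Finset.card_univ, Fintype.card_fin]
  rw [inv_pow, inv_mul_cancel_left₀ hpi]

/-! ### Uniform local limit estimate -/

/-- Centred one-dimensional Gaussian density of variance `s`, at the integer `n`. -/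
def gau1 (s : ℝ) (n : ℤ) : ℝ := (Real.sqrt (2 * Real.pi * s))⁻¹ * Real.exp (-(n : ℝ) ^ 2 / (2 * s))

lemma gau1_fourier {s : ℝ} (hs : 0 < s) (n : ℤ) :
    (gau1 s n : ℂ) = (2 * (Real.pi : ℂ))⁻¹ *
      ∫ x : ℝ, Complex.exp (-(s / 2 * x ^ 2 : ℝ)) * Complex.exp (Complex.I * n * x) := by
  have hpi := Real.pi_pos
  have h := fourierIntegral_gaussian (b := ((s / 2 : ℝ) : ℂ)) (by simpa using hs) (n : ℂ)
  have e : ∀ x : ℝ, Complex.exp (-(s / 2 * x ^ 2 : ℝ)) * Complex.exp (Complex.I * n * x)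
      = Complex.exp (Complex.I * n * x) * Complex.exp (-((s / 2 : ℝ) : ℂ) * (x : ℂ) ^ 2) := by
    intro x; rw [mul_comm]; push_cast; ring_nf
  simp only [e]
  rw [h]
  have e1 : ((Real.pi : ℂ) / ((s / 2 : ℝ) : ℂ)) ^ (1 / 2 : ℂ)
      = ((Real.sqrt (Real.pi / (s / 2)) : ℝ) : ℂ) := by
    rw [Real.sqrt_eq_rpow, Complex.ofReal_cpow (by positivity)]
    push_cast; rfl
  have e2 : Complex.exp (-(n : ℂ) ^ 2 / (4 * ((s / 2 : ℝ) : ℂ)))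
      = ((Real.exp (-(n : ℝ) ^ 2 / (2 * s)) : ℝ) : ℂ) := by
    push_cast; congr 1; ring
  have e3 : (Real.sqrt (2 * Real.pi * s))⁻¹
      = (2 * Real.pi)⁻¹ * Real.sqrt (Real.pi / (s / 2)) := by
    have : Real.pi / (s / 2) = (2 * Real.pi) ^ 2 / (2 * Real.pi * s) := by
      field_simp
    rw [this, Real.sqrt_div' _ (by positivity), Real.sqrt_sq (by positivity)]
    field_simp
  rw [e1, e2, gau1, e3]
  push_cast; ring

lemma sq_div_pi_le {x : ℝ} (hx : |x| ≤ Real.pi) :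
    2 / Real.pi ^ 2 * x ^ 2 ≤ 1 - Real.cos x := by
  linarith [Real.cos_le_one_sub_mul_cos_sq hx]

lemma quartic_bound (x : ℝ) : x ^ 2 / 2 - (1 - Real.cos x) ≤ x ^ 4 / 2 := by
  by_cases h : |x| ≤ 1
  · have := (abs_le.1 (Real.cos_bound h)).2
    have e : |x| ^ 4 = x ^ 4 := by rw [Even.pow_abs (by decide)]
    rw [e] at this
    nlinarith [sq_nonneg (x ^ 2)]
  · have h1 : 1 ≤ x ^ 2 := by
      rw [← sq_abs]; nlinarith [not_le.1 h]
    nlinarith [Real.cos_le_one x]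

/-- On the period, the Fourier transforms of the walk kernel and of the Gaussian differ by at most
`O(1/s)` times a Gaussian factor of width of order `1/√s`. -/
lemma symbol_bound {s : ℝ} (hs : 0 < s) {x : ℝ} (hx : |x| ≤ Real.pi) :
    |Real.exp (-(s * (1 - Real.cos x))) - Real.exp (-(s / 2 * x ^ 2))|
      ≤ Real.pi ^ 4 / s * Real.exp (-(s / Real.pi ^ 2) * x ^ 2) := by
  have hpi := Real.pi_pos
  set a := s * (1 - Real.cos x) with ha
  set b := s / 2 * x ^ 2 with hb
  set y := s / Real.pi ^ 2 * x ^ 2 with hy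
  have hab : a ≤ b := by
    have := Real.one_sub_sq_div_two_le_cos (x := x)
    rw [ha, hb]; nlinarith
  have h2y : 2 * y ≤ a := by
    have := mul_le_mul_of_nonneg_left (sq_div_pi_le hx) hs.le
    rw [hy, ha]; refine le_trans (le_of_eq ?_) this; ring
  have hy0 : 0 ≤ y := by rw [hy]; positivity
  have hdiff : b - a ≤ s * (x ^ 4 / 2) := by
    have := mul_le_mul_of_nonneg_left (quartic_bound x) hs.le
    rw [ha, hb]; linarith
  have hexp : s * (x ^ 4 / 2) ≤ Real.pi ^ 4 / s * Real.exp y := by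
    have h := Real.pow_div_factorial_le_exp y hy0 2
    have e : s * (x ^ 4 / 2) = Real.pi ^ 4 / s * (y ^ 2 / (Nat.factorial 2 : ℝ)) := by
      rw [hy]; simp [Nat.factorial]; field_simp
    rw [e]; gcongr
  have h1 : Real.exp (-b) ≤ Real.exp (-a) := Real.exp_le_exp.2 (by linarith)
  rw [abs_of_nonneg (by linarith)]
  have h3 : Real.exp (-a) - Real.exp (-b) ≤ Real.exp (-a) * (b - a) := by
    have := Real.add_one_le_exp (-(b - a))
    have e : Real.exp (-b) = Real.exp (-a) * Real.exp (-(b - a)) := by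
      rw [← Real.exp_add]; congr 1; ring
    rw [e]
    nlinarith [Real.exp_pos (-a)]
  calc _ ≤ Real.exp (-a) * (b - a) := h3
    _ ≤ Real.exp (-(2 * y)) * (Real.pi ^ 4 / s * Real.exp y) := by
        have : 0 ≤ b - a := by linarith
        gcongr
        linarith
    _ = _ := by
        rw [mul_left_comm, ← Real.exp_add]
        congr 2; rw [hy]; ring

lemma gauss_tail_bound {s : ℝ} (hs : 0 < s) {x : ℝ} (hx : Real.pi ≤ |x|) :
    Real.exp (-(s / 2 * x ^ 2)) ≤ Real.pi ^ 4 / s * Real.exp (-(s / Real.pi ^ 2) * x ^ 2) := by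
  have hpi := Real.pi_pos
  have h3 := Real.pi_gt_three
  have hx2 : Real.pi ^ 2 ≤ x ^ 2 := by rw [← sq_abs x]; gcongr
  have hp9 : 9 ≤ Real.pi ^ 2 := by nlinarith
  set w := s / Real.pi ^ 2 * x ^ 2 with hw
  have hwx : w ≤ s / 9 * x ^ 2 := by rw [hw]; gcongr
  have hsw : s ≤ s / 2 * x ^ 2 - w := by nlinarith
  have h1 : Real.exp (-s) ≤ Real.pi ^ 4 / s := by
    rw [Real.exp_neg, inv_le_comm₀ (Real.exp_pos _) (by positivity), inv_div]
    have := Real.add_one_le_exp s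
    have h4 : 1 ≤ Real.pi ^ 4 := one_le_pow₀ (by linarith)
    have : s / Real.pi ^ 4 ≤ s := div_le_self hs.le h4
    linarith
  calc _ ≤ Real.exp (-s) * Real.exp (-w) := by
        rw [← Real.exp_add]; exact Real.exp_le_exp.2 (by linarith)
    _ ≤ _ := by
        rw [hw, neg_mul]; gcongr

lemma norm_exp_ofReal_neg (a : ℝ) : ‖Complex.exp (-(a : ℂ))‖ = Real.exp (-a) := by
  rw [← Complex.ofReal_neg, ← Complex.ofReal_exp, Complex.norm_real,
    Real.norm_of_nonneg (Real.exp_pos _).le]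

lemma norm_char (n : ℤ) (x : ℝ) : ‖Complex.exp (Complex.I * n * x)‖ = 1 := by
  rw [show Complex.I * (n : ℂ) * (x : ℂ) = (((n : ℝ) * x : ℝ) : ℂ) * Complex.I by
    push_cast; ring]
  exact Complex.norm_exp_ofReal_mul_I _

lemma integral_gauss_pi {s : ℝ} (hs : 0 < s) :
    ∫ x : ℝ, Real.exp (-(s / Real.pi ^ 2) * x ^ 2) = Real.sqrt (Real.pi ^ 3) / Real.sqrt s := by
  rw [integral_gaussian, ← Real.sqrt_div' _ hs.le]
  congr 1
  have := Real.pi_pos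
  field_simp

lemma two_pi_inv_le_one : (2 * Real.pi)⁻¹ ≤ 1 :=
  inv_le_one_of_one_le₀ (by linarith [Real.pi_gt_three])

lemma norm_two_pi_inv : ‖(2 * (Real.pi : ℂ))⁻¹‖ = (2 * Real.pi)⁻¹ := by
  rw [norm_inv, norm_mul, Complex.norm_real, Real.norm_of_nonneg Real.pi_pos.le]; norm_num

lemma ker1_eq_indicator (s : ℝ) (n : ℤ) :
    ker1 s n = (2 * (Real.pi : ℂ))⁻¹ * ∫ x : ℝ, (Set.Ioc (-Real.pi) Real.pi).indicator
      (fun x : ℝ => Complex.exp (-(s * (1 - Real.cos x) : ℝ)) * Complex.exp (Complex.I * n * x)) x := by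
  rw [integral_indicator measurableSet_Ioc]; rfl

lemma norm_ker1_le {s : ℝ} (hs : 0 < s) (n : ℤ) :
    ‖ker1 s n‖ ≤ Real.sqrt (Real.pi ^ 3) / Real.sqrt s := by
  have hpi := Real.pi_pos
  rw [ker1_eq_indicator, norm_mul, norm_two_pi_inv]
  have : ‖∫ x : ℝ, (Set.Ioc (-Real.pi) Real.pi).indicator
      (fun x : ℝ => Complex.exp (-(s * (1 - Real.cos x) : ℝ)) *
        Complex.exp (Complex.I * n * x)) x‖ ≤ Real.sqrt (Real.pi ^ 3) / Real.sqrt s := by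
    rw [← integral_gauss_pi hs]
    refine norm_integral_le_of_norm_le (integrable_exp_neg_mul_sq (by positivity))
      (ae_of_all _ fun x => ?_)
    by_cases hx : x ∈ Set.Ioc (-Real.pi) Real.pi
    · rw [Set.indicator_of_mem hx, norm_mul, norm_char, mul_one, norm_exp_ofReal_neg]
      have h := mul_le_mul_of_nonneg_left
        (sq_div_pi_le (abs_le.2 ⟨hx.1.le, hx.2⟩)) hs.le
      refine Real.exp_le_exp.2 ?_
      have : 0 ≤ s / Real.pi ^ 2 * x ^ 2 := by positivity
      have e : s * (2 / Real.pi ^ 2 * x ^ 2) = 2 * (s / Real.pi ^ 2 * x ^ 2) := by ring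
      linarith
    · rw [Set.indicator_of_notMem hx, norm_zero]; positivity
  calc _ ≤ 1 * _ := mul_le_mul two_pi_inv_le_one this (norm_nonneg _) (by norm_num)
    _ = _ := one_mul _

lemma gau1_nonneg (s : ℝ) (n : ℤ) : 0 ≤ gau1 s n := by unfold gau1; positivity

lemma gau1_le {s : ℝ} (hs : 0 < s) (n : ℤ) :
    gau1 s n ≤ Real.sqrt (Real.pi ^ 3) / Real.sqrt s := by
  have hpi := Real.pi_gt_three
  have h1 : Real.exp (-(n : ℝ) ^ 2 / (2 * s)) ≤ 1 := by
    rw [Real.exp_le_one_iff, neg_div]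
    have : 0 ≤ (n : ℝ) ^ 2 / (2 * s) := by positivity
    linarith
  have h2 : (Real.sqrt (2 * Real.pi * s))⁻¹ ≤ Real.sqrt (Real.pi ^ 3) / Real.sqrt s := by
    rw [Real.sqrt_mul (by positivity), mul_inv, div_eq_mul_inv]
    gcongr
    calc (Real.sqrt (2 * Real.pi))⁻¹ ≤ 1 :=
          inv_le_one_of_one_le₀ (Real.one_le_sqrt.2 (by linarith))
      _ ≤ _ := Real.one_le_sqrt.2 (one_le_pow₀ (by linarith))
  unfold gau1
  calc _ ≤ (Real.sqrt (2 * Real.pi * s))⁻¹ * 1 := by gcongr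
    _ ≤ _ := by rwa [mul_one]

lemma norm_ker1_sub_gau1 {s : ℝ} (hs : 0 < s) (n : ℤ) :
    ‖ker1 s n - gau1 s n‖ ≤ Real.sqrt (Real.pi ^ 3) / Real.sqrt s * (Real.pi ^ 4 / s) := by
  have hpi := Real.pi_pos
  have hi1 : Integrable ((Set.Ioc (-Real.pi) Real.pi).indicator
      (fun x : ℝ => Complex.exp (-(s * (1 - Real.cos x) : ℝ)) *
        Complex.exp (Complex.I * n * x))) := by
    rw [integrable_indicator_iff measurableSet_Ioc]
    refine Continuous.integrableOn_Ioc ?_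
    fun_prop
  have hi2 : Integrable (fun x : ℝ => Complex.exp (-(s / 2 * x ^ 2 : ℝ)) *
      Complex.exp (Complex.I * n * x)) := by
    refine (integrable_exp_neg_mul_sq (half_pos hs)).mono'
      (Continuous.aestronglyMeasurable (by fun_prop)) (ae_of_all _ fun x => ?_)
    rw [norm_mul, norm_char, mul_one, norm_exp_ofReal_neg, neg_mul]
  rw [ker1_eq_indicator, gau1_fourier hs, ← mul_sub, ← integral_sub hi1 hi2, norm_mul,
    norm_two_pi_inv]
  have : ‖∫ x : ℝ, ((Set.Ioc (-Real.pi) Real.pi).indicator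
      (fun x : ℝ => Complex.exp (-(s * (1 - Real.cos x) : ℝ)) *
        Complex.exp (Complex.I * n * x)) x - Complex.exp (-(s / 2 * x ^ 2 : ℝ)) *
      Complex.exp (Complex.I * n * x))‖
        ≤ Real.sqrt (Real.pi ^ 3) / Real.sqrt s * (Real.pi ^ 4 / s) := by
    rw [← integral_gauss_pi hs, ← integral_mul_const]
    refine norm_integral_le_of_norm_le
      ((integrable_exp_neg_mul_sq (by positivity)).mul_const _) (ae_of_all _ fun x => ?_)
    rw [mul_comm (Real.exp _) (Real.pi ^ 4 / s)]
    by_cases hx : x ∈ Set.Ioc (-Real.pi) Real.pi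
    · rw [Set.indicator_of_mem hx, ← sub_mul, norm_mul, norm_char, mul_one,
        ← Complex.ofReal_neg, ← Complex.ofReal_neg, ← Complex.ofReal_exp, ← Complex.ofReal_exp,
        ← Complex.ofReal_sub, Complex.norm_real, Real.norm_eq_abs]
      exact symbol_bound hs (abs_le.2 ⟨hx.1.le, hx.2⟩)
    · rw [Set.indicator_of_notMem hx, zero_sub, norm_neg, norm_mul, norm_char, mul_one,
        norm_exp_ofReal_neg]
      refine gauss_tail_bound hs ?_
      by_contra hc
      have := abs_lt.1 (not_le.1 hc)
      exact hx ⟨this.1, this.2.le⟩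
  calc _ ≤ 1 * _ := mul_le_mul two_pi_inv_le_one this (norm_nonneg _) (by norm_num)
    _ = _ := one_mul _

lemma norm_prod_sub_prod_le_of_bounds {ι : Type*} (S : Finset ι) (a b : ι → ℂ) {A D : ℝ} (hA : 0 ≤ A)
    (ha : ∀ i, ‖a i‖ ≤ A) (hb : ∀ i, ‖b i‖ ≤ A) (hab : ∀ i, ‖a i - b i‖ ≤ A * D) :
    ‖∏ i ∈ S, a i - ∏ i ∈ S, b i‖ ≤ S.card * A ^ S.card * D := by
  classical
  induction S using Finset.induction_on with
  | empty => simp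
  | insert i S hi ih =>
    rw [Finset.prod_insert hi, Finset.prod_insert hi, Finset.card_insert_of_notMem hi]
    have hB : ‖∏ i ∈ S, b i‖ ≤ A ^ S.card := by
      rw [norm_prod]
      refine (Finset.prod_le_prod (fun _ _ => norm_nonneg _) fun i _ => hb i).trans ?_
      simp
    have e : a i * ∏ i ∈ S, a i - b i * ∏ i ∈ S, b i
        = a i * (∏ i ∈ S, a i - ∏ i ∈ S, b i) + (a i - b i) * ∏ i ∈ S, b i := by ring
    rw [e]
    calc _ ≤ ‖a i‖ * ‖∏ i ∈ S, a i - ∏ i ∈ S, b i‖ + ‖a i - b i‖ * ‖∏ i ∈ S, b i‖ := by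
          refine (norm_add_le _ _).trans ?_
          rw [norm_mul, norm_mul]
      _ ≤ A * (S.card * A ^ S.card * D) + (A * D) * A ^ S.card := by
          refine add_le_add (mul_le_mul (ha i) ih (norm_nonneg _) hA)
            (mul_le_mul (hab i) hB (norm_nonneg _) ((norm_nonneg _).trans (hab i)))
      _ = _ := by push_cast; ring

/-- Centred Gaussian density of covariance `(t/d) I`, the approximation of `ctK`. -/
def heatG (d : ℕ) (z : Fin d → ℤ) (t : ℝ) : ℝ := ∏ i, gau1 (t / d) (z i)

lemma heatG_nonneg (d : ℕ) (z : Fin d → ℤ) (t : ℝ) : 0 ≤ heatG d z t :=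
  Finset.prod_nonneg fun _ _ => gau1_nonneg _ _

/-- On-diagonal bound and local limit theorem, uniform in space: the error gains a factor `1/t`. -/
lemma local_limit (d : ℕ) (hd : 0 < d) : ∃ C : ℝ, 0 < C ∧ ∀ (z : Fin d → ℤ) (t : ℝ), 0 < t →
    ctK d z t ≤ C * t ^ (-(d : ℝ) / 2) ∧
      t * |ctK d z t - heatG d z t| ≤ C * t ^ (-(d : ℝ) / 2) := by
  have hpi := Real.pi_pos
  have hd' : (0 : ℝ) < d := by exact_mod_cast hd
  set A := Real.sqrt (Real.pi ^ 3) with hA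
  have hApos : 0 < A := Real.sqrt_pos.2 (by positivity)
  set B : ℝ := A ^ d * (d : ℝ) ^ ((d : ℝ) / 2) with hB
  have hBpos : 0 < B := by positivity
  set E : ℝ := d * (Real.pi ^ 4 * d) with hE
  have hEpos : 0 < E := by positivity
  have hpow : ∀ t : ℝ, 0 < t → (A / Real.sqrt (t / d)) ^ d = B * t ^ (-(d : ℝ) / 2) := by
    intro t ht
    have e : Real.sqrt (t / d) ^ d = (t / d) ^ ((d : ℝ) / 2) := by
      rw [Real.sqrt_eq_rpow, ← Real.rpow_natCast, ← Real.rpow_mul (by positivity)]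
      congr 1; ring
    rw [div_pow, e, Real.div_rpow ht.le hd'.le, neg_div, Real.rpow_neg ht.le, hB]
    have := Real.rpow_pos_of_pos ht ((d : ℝ) / 2)
    have := Real.rpow_pos_of_pos hd' ((d : ℝ) / 2)
    field_simp
  refine ⟨B * (1 + E), by positivity, fun z t ht => ?_⟩
  have hs : 0 < t / d := by positivity
  have htp := Real.rpow_pos_of_pos ht (-(d : ℝ) / 2)
  have hprod := ctK_eq_prod d hd z ht.le
  constructor
  · have h1 : ctK d z t = ‖(ctK d z t : ℂ)‖ := by
      rw [Complex.norm_real, Real.norm_of_nonneg (ctK_nonneg d z ht.le)]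
    rw [h1, hprod, norm_prod]
    calc _ ≤ ∏ _i : Fin d, (A / Real.sqrt (t / d)) :=
          Finset.prod_le_prod (fun _ _ => norm_nonneg _) fun i _ => norm_ker1_le hs _
      _ = B * t ^ (-(d : ℝ) / 2) := by
          rw [Finset.prod_const, Finset.card_univ, Fintype.card_fin, hpow t ht]
      _ ≤ _ := by
          have : 0 ≤ B * E * t ^ (-(d : ℝ) / 2) := by positivity
          nlinarith
  · have h2 : |ctK d z t - heatG d z t|
        = ‖∏ i, ker1 (t / d) (z i) - ∏ i, (gau1 (t / d) (z i) : ℂ)‖ := by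
      rw [← hprod, ← Complex.ofReal_prod, ← Complex.ofReal_sub, Complex.norm_real,
        Real.norm_eq_abs]; rfl
    have h3 := norm_prod_sub_prod_le_of_bounds Finset.univ (fun i => ker1 (t / d) (z i))
      (fun i => (gau1 (t / d) (z i) : ℂ)) (A := A / Real.sqrt (t / d))
      (D := Real.pi ^ 4 / (t / d)) (by positivity)
      (fun i => norm_ker1_le hs _)
      (fun i => by
        rw [Complex.norm_real, Real.norm_of_nonneg (gau1_nonneg _ _)]; exact gau1_le hs _)
      (fun i => norm_ker1_sub_gau1 hs _)
    rw [Finset.card_univ, Fintype.card_fin, hpow t ht] at h3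
    rw [h2]
    calc _ ≤ t * (d * (B * t ^ (-(d : ℝ) / 2)) * (Real.pi ^ 4 / (t / d))) := by gcongr
      _ = B * E * t ^ (-(d : ℝ) / 2) := by rw [hE]; field_simp
      _ ≤ _ := by
          have : 0 ≤ B * t ^ (-(d : ℝ) / 2) := by positivity
          nlinarith

/-! ### Decay in space -/

lemma nrmZ_sq (d : ℕ) (z : Fin d → ℤ) : nrmZ d z ^ 2 = ∑ i, (z i : ℝ) ^ 2 :=
  Real.sq_sqrt (Finset.sum_nonneg fun _ _ => sq_nonneg _)

lemma exists_large_coord (d : ℕ) (hd : 0 < d) (z : Fin d → ℤ) :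
    ∃ i, nrmZ d z ^ 2 ≤ d * (z i : ℝ) ^ 2 := by
  by_contra! h
  have hne : (Finset.univ : Finset (Fin d)).Nonempty := ⟨⟨0, hd⟩, Finset.mem_univ _⟩
  have h1 := Finset.sum_lt_sum_of_nonempty hne fun i _ => h i
  rw [← Finset.mul_sum, ← nrmZ_sq] at h1
  simp at h1

lemma exp_neg_le_factorial_div {x : ℝ} (hx : 0 < x) (n : ℕ) :
    Real.exp (-x) ≤ n.factorial / x ^ n := by
  have h := Real.pow_div_factorial_le_exp x hx.le n
  rw [Real.exp_neg, inv_le_comm₀ (Real.exp_pos _) (by positivity), inv_div]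
  exact h

lemma cosh_sub_one_le {l : ℝ} (hl : l ^ 2 ≤ 1) : Real.cosh l - 1 ≤ l ^ 2 := by
  have h1 := Real.cosh_le_exp_half_sq l
  have h0 : 0 ≤ l ^ 2 / 2 := by positivity
  have h2 := (abs_le.1 (Real.abs_exp_sub_one_le (x := l ^ 2 / 2)
    (by rw [abs_of_nonneg h0]; linarith))).2
  rw [abs_of_nonneg h0] at h2
  linarith

/-- For times below `|z|^{2-δ}` this beats every power of `|z|`, as `N` is arbitrary. -/
lemma ctK_decay (d : ℕ) (hd : 0 < d) (N : ℕ) : ∃ C : ℝ, 0 < C ∧ ∀ (z : Fin d → ℤ) (t : ℝ),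
    0 < nrmZ d z → 0 < t → ctK d z t ≤ C * ((1 + t) / nrmZ d z ^ 2) ^ N := by
  have hd' : (0 : ℝ) < d := by exact_mod_cast hd
  have hd1 : (1 : ℝ) ≤ d := by exact_mod_cast hd
  refine ⟨(2 * N).factorial * Real.exp 1 * (d : ℝ) ^ N, by positivity, fun z t hR ht => ?_⟩
  obtain ⟨i, hi⟩ := exists_large_coord d hd z
  have hzi2 : 0 < (z i : ℝ) ^ 2 := by
    by_contra hc
    have : (z i : ℝ) ^ 2 ≤ 0 := not_lt.1 hc
    nlinarith [pow_pos hR 2]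
  have hzi : (z i : ℝ) ≠ 0 := by
    intro h; rw [h] at hzi2; norm_num at hzi2
  set m := Real.sqrt (1 + t) with hm
  have hm2 : m ^ 2 = 1 + t := Real.sq_sqrt (by linarith)
  have hmpos : 0 < m := Real.sqrt_pos.2 (by linarith)
  -- tilt at scale `1/√(1+t)`, in the direction of the sign of `z i`
  obtain ⟨l, hl, hlz⟩ : ∃ l : ℝ, l ^ 2 = 1 / (1 + t) ∧ l * z i = |(z i : ℝ)| / m := by
    rcases le_total 0 (z i : ℝ) with h | h
    · exact ⟨1 / m, by rw [div_pow, hm2, one_pow], by rw [abs_of_nonneg h]; ring⟩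
    · exact ⟨-(1 / m), by rw [neg_sq, div_pow, hm2, one_pow], by rw [abs_of_nonpos h]; ring⟩
  have hl1 : l ^ 2 ≤ 1 := by
    rw [hl, div_le_one (by linarith)]; linarith
  have h1 := ctK_chernoff d hd z ht.le i l
  have h2 : t * ((Real.cosh l - 1) / d) ≤ 1 := by
    have := cosh_sub_one_le hl1
    calc t * ((Real.cosh l - 1) / d) ≤ t * (l ^ 2 / 1) := by gcongr
      _ = t / (1 + t) := by rw [hl]; ring
      _ ≤ 1 := by rw [div_le_one (by linarith)]; linarith
  have h3 : Real.exp (-(l * z i)) ≤ (2 * N).factorial / ((z i : ℝ) ^ 2 / (1 + t)) ^ N := by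
    rw [hlz]
    refine (exp_neg_le_factorial_div (by positivity) (2 * N)).trans (le_of_eq ?_)
    rw [pow_mul, div_pow |(z i : ℝ)|, sq_abs, hm2]
  have h4 : ((2 * N).factorial : ℝ) / ((z i : ℝ) ^ 2 / (1 + t)) ^ N
      ≤ (2 * N).factorial * (d : ℝ) ^ N * ((1 + t) / nrmZ d z ^ 2) ^ N := by
    rw [div_eq_mul_inv, ← inv_pow, inv_div, mul_assoc, ← mul_pow]
    gcongr
    rw [← mul_div_assoc, div_le_div_iff₀ hzi2 (by positivity)]
    nlinarith
  calc _ ≤ _ := h1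
    _ ≤ ((2 * N).factorial * (d : ℝ) ^ N * ((1 + t) / nrmZ d z ^ 2) ^ N) * Real.exp 1 := by
        refine mul_le_mul (h3.trans h4) (Real.exp_le_exp.2 h2) (Real.exp_pos _).le (by positivity)
    _ = _ := by ring

lemma heatG_eq (d : ℕ) (hd : 0 < d) (z : Fin d → ℤ) {t : ℝ} (ht : 0 < t) :
    heatG d z t = ((d : ℝ) / (2 * Real.pi)) ^ ((d : ℝ) / 2) * t ^ (-(d : ℝ) / 2)
      * Real.exp (-((d : ℝ) / 2 * nrmZ d z ^ 2 / t)) := by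
  have hd' : (0 : ℝ) < d := by exact_mod_cast hd
  have hpi := Real.pi_pos
  unfold heatG gau1
  rw [Finset.prod_mul_distrib, Finset.prod_const, Finset.card_univ, Fintype.card_fin,
    ← Real.exp_sum]
  congr 1
  · rw [Real.sqrt_eq_rpow, ← Real.rpow_neg (by positivity), ← Real.rpow_natCast,
      ← Real.rpow_mul (by positivity),
      show 2 * Real.pi * (t / d) = t / (d / (2 * Real.pi)) by field_simp,
      show -(1 / 2 : ℝ) * (d : ℝ) = -(d : ℝ) / 2 by ring, Real.div_rpow ht.le (by positivity),
      neg_div, Real.rpow_neg (by positivity : (0 : ℝ) ≤ d / (2 * Real.pi)), div_inv_eq_mul,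
      mul_comm]
  · congr 1
    rw [nrmZ_sq, ← Finset.sum_div, Finset.sum_neg_distrib]
    field_simp

lemma heatG_decay (d : ℕ) (hd : 0 < d) (N : ℕ) (hN : d ≤ N) :
    ∃ C : ℝ, 0 < C ∧ ∀ (z : Fin d → ℤ) (t : ℝ),
      0 < nrmZ d z → 0 < t → heatG d z t ≤ C * ((1 + t) / nrmZ d z ^ 2) ^ N := by
  have hd' : (0 : ℝ) < d := by exact_mod_cast hd
  have hN' : (d : ℝ) ≤ N := by exact_mod_cast hN
  have hpi := Real.pi_pos
  set A := ((d : ℝ) / (2 * Real.pi)) ^ ((d : ℝ) / 2) with hA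
  have hApos : 0 < A := by positivity
  refine ⟨A * (N.factorial / ((d : ℝ) / 2) ^ N), by positivity, fun z t hR ht => ?_⟩
  rw [heatG_eq d hd z ht, ← hA]
  have h1 := exp_neg_le_factorial_div (x := (d : ℝ) / 2 * nrmZ d z ^ 2 / t) (by positivity) N
  have h2 : t ^ (-(d : ℝ) / 2) * t ^ N ≤ (1 + t) ^ N := by
    rw [← Real.rpow_natCast, ← Real.rpow_natCast, ← Real.rpow_add ht]
    calc t ^ (-(d : ℝ) / 2 + N) ≤ (1 + t) ^ (-(d : ℝ) / 2 + N) :=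
          Real.rpow_le_rpow ht.le (by linarith) (by linarith)
      _ ≤ (1 + t) ^ (N : ℝ) := Real.rpow_le_rpow_of_exponent_le (by linarith) (by linarith)
  have htp := Real.rpow_pos_of_pos ht (-(d : ℝ) / 2)
  calc _ ≤ A * t ^ (-(d : ℝ) / 2) * (N.factorial / ((d : ℝ) / 2 * nrmZ d z ^ 2 / t) ^ N) := by
        gcongr
    _ = A * (N.factorial / ((d : ℝ) / 2) ^ N) * ((t ^ (-(d : ℝ) / 2) * t ^ N)
          / (nrmZ d z ^ 2) ^ N) := by
        rw [div_pow, mul_pow]; field_simp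
    _ ≤ A * (N.factorial / ((d : ℝ) / 2) ^ N) * ((1 + t) ^ N / (nrmZ d z ^ 2) ^ N) := by gcongr
    _ = _ := by rw [div_pow (1 + t)]

/-! ### Integration in time -/

/-- The error estimate. A function of time that is small for `t ≪ R²` and bounded by `t^{-d/2}`
has integral `O(R^{2-d+ε})`: the times `t ≤ R^{2-δ}` are negligible for large `N`, and the later
ones contribute `(R^{2-δ})^{1-d/2}`. -/
lemma split_bound (d : ℕ) (hd : 2 < d) (ε : ℝ) (hε : 0 < ε) : ∃ N : ℕ, d ≤ N ∧
    ∀ C₁ C₂ : ℝ, 0 ≤ C₁ → 0 ≤ C₂ → ∃ C : ℝ, 0 ≤ C ∧ ∀ (R : ℝ) (D : ℝ → ℝ), 1 ≤ R →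
      (∀ t, 0 < t → D t ≤ C₁ * (1 + t) * ((1 + t) / R ^ 2) ^ N) →
      (∀ t, 0 < t → D t ≤ C₂ * t ^ (-(d : ℝ) / 2)) →
      ∫⁻ t in Set.Ioi (0 : ℝ), ENNReal.ofReal (D t)
        ≤ ENNReal.ofReal (C * R ^ (2 - (d : ℝ) + ε)) := by
  have hd' : (2 : ℝ) < d := by exact_mod_cast hd
  set δ : ℝ := min 1 (ε / d) with hδ
  have hδpos : 0 < δ := lt_min one_pos (by positivity)
  have hδ1 : δ ≤ 1 := min_le_left _ _
  have hδε : δ * d ≤ ε := by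
    have : δ ≤ ε / d := min_le_right _ _
    rwa [le_div_iff₀ (by linarith)] at this
  set N : ℕ := max d ⌈(2 + (d : ℝ)) / δ⌉₊ with hN
  have hNδ : 2 + (d : ℝ) ≤ N * δ := by
    have h1 : (2 + (d : ℝ)) / δ ≤ N := (Nat.le_ceil _).trans (Nat.cast_le.2 (le_max_right _ _))
    rwa [div_le_iff₀ hδpos] at h1
  refine ⟨N, le_max_left _ _, fun C₁ C₂ hC₁ hC₂ => ?_⟩
  refine ⟨C₁ * 2 ^ (N + 1) + C₂ / (d / 2 - 1), ?_, fun R D hR hD₁ hD₂ => ?_⟩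
  · have : (0 : ℝ) < d / 2 - 1 := by linarith
    positivity
  have hRpos : 0 < R := by linarith
  -- cut the time integral at `T = R^{2-δ}`
  set T : ℝ := R ^ (2 - δ) with hT
  have hTpos : 0 < T := Real.rpow_pos_of_pos hRpos _
  have hT1 : 1 ≤ T := Real.one_le_rpow hR (by linarith)
  have hsplit : Set.Ioi (0 : ℝ) = Set.Ioc 0 T ∪ Set.Ioi T :=
    (Set.Ioc_union_Ioi_eq_Ioi hTpos.le).symm
  set P := R ^ (2 - (d : ℝ) + ε) with hP
  have hPpos : 0 < P := Real.rpow_pos_of_pos hRpos _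
  have hA : ∫⁻ t in Set.Ioc 0 T, ENNReal.ofReal (D t)
      ≤ ENNReal.ofReal (C₁ * 2 ^ (N + 1) * P) := by
    have hb : ∀ t ∈ Set.Ioc 0 T, ENNReal.ofReal (D t)
        ≤ ENNReal.ofReal (C₁ * (2 * T) * ((2 * T) / R ^ 2) ^ N) := by
      intro t ht
      refine ENNReal.ofReal_le_ofReal ((hD₁ t ht.1).trans ?_)
      have h0 := ht.1
      have : 1 + t ≤ 2 * T := by linarith [ht.2]
      gcongr
    refine (setLIntegral_mono measurable_const hb).trans ?_
    rw [setLIntegral_const, Real.volume_Ioc, ← ENNReal.ofReal_mul (by positivity)]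
    refine ENNReal.ofReal_le_ofReal ?_
    have e : C₁ * (2 * T) * ((2 * T) / R ^ 2) ^ N * (T - 0)
        = C₁ * 2 ^ (N + 1) * (T ^ (N + 2) / R ^ (2 * N)) := by
      rw [div_pow, mul_pow, pow_mul]; field_simp; ring
    rw [e]
    gcongr
    rw [hT, hP, ← Real.rpow_natCast, ← Real.rpow_natCast, ← Real.rpow_mul hRpos.le,
      ← Real.rpow_sub hRpos]
    refine Real.rpow_le_rpow_of_exponent_le hR ?_
    push_cast
    nlinarith
  have hB : ∫⁻ t in Set.Ioi T, ENNReal.ofReal (D t)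
      ≤ ENNReal.ofReal (C₂ / (d / 2 - 1) * P) := by
    have hlt : -(d : ℝ) / 2 < -1 := by linarith
    have hb : ∀ t ∈ Set.Ioi T, ENNReal.ofReal (D t)
        ≤ ENNReal.ofReal (C₂ * t ^ (-(d : ℝ) / 2)) := fun t ht =>
      ENNReal.ofReal_le_ofReal (hD₂ t (hTpos.trans ht))
    refine (setLIntegral_mono (by fun_prop) hb).trans ?_
    rw [← ofReal_integral_eq_lintegral_ofReal
      ((integrableOn_Ioi_rpow_of_lt hlt hTpos).const_mul _), integral_const_mul,
      integral_Ioi_rpow_of_lt hlt hTpos]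
    · refine ENNReal.ofReal_le_ofReal ?_
      have h2 : (0 : ℝ) < d / 2 - 1 := by linarith
      have e : C₂ * (-T ^ (-(d : ℝ) / 2 + 1) / (-(d : ℝ) / 2 + 1))
          = C₂ / (d / 2 - 1) * T ^ (-(d : ℝ) / 2 + 1) := by
        have h3 : -(d : ℝ) / 2 + 1 = -(d / 2 - 1) := by ring
        rw [show (-(d : ℝ) / 2 + 1) = -(d / 2 - 1) from h3, neg_div_neg_eq]; ring
      rw [e]
      gcongr
      rw [hT, hP, ← Real.rpow_mul hRpos.le]
      refine Real.rpow_le_rpow_of_exponent_le hR ?_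
      nlinarith
    · filter_upwards [ae_restrict_mem measurableSet_Ioi] with t ht
      have : 0 < t := hTpos.trans ht
      have := Real.rpow_pos_of_pos this (-(d : ℝ) / 2)
      positivity
  rw [hsplit]
  refine (lintegral_union_le _ _ _).trans ((add_le_add hA hB).trans (le_of_eq ?_))
  have h2 : (0 : ℝ) < d / 2 - 1 := by linarith
  rw [← ENNReal.ofReal_add (by positivity) (by positivity)]
  congr 1; ring

/-- The function `t · heatG` at distance `1`, of which every other distance is a rescaling;
its integral over `(0, ∞)` is the constant in front of `‖z‖^{-(d-4)}` in `g ⋆ g`. -/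
def prof (d : ℕ) (u : ℝ) : ℝ := ((d : ℝ) / (2 * Real.pi)) ^ ((d : ℝ) / 2) *
  (u ^ (1 - (d : ℝ) / 2) * Real.exp (-((d : ℝ) / 2 / u)))

lemma prof_pos (d : ℕ) (hd : 0 < d) {u : ℝ} (hu : 0 < u) : 0 < prof d u := by
  have hd' : (0 : ℝ) < d := by exact_mod_cast hd
  have := Real.rpow_pos_of_pos hu (1 - (d : ℝ) / 2)
  have := Real.pi_pos
  unfold prof; positivity

lemma integrable_prof (d : ℕ) (hd : 4 < d) : IntegrableOn (prof d) (Set.Ioi 0) := by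
  have hd' : (4 : ℝ) < d := by exact_mod_cast hd
  have hpi := Real.pi_pos
  unfold prof
  refine Integrable.const_mul ?_ _
  change IntegrableOn (fun u : ℝ => u ^ (1 - (d : ℝ) / 2) * Real.exp (-((d : ℝ) / 2 / u))) (Set.Ioi 0)
  have hmeas : Measurable fun u : ℝ => u ^ (1 - (d : ℝ) / 2) * Real.exp (-((d : ℝ) / 2 / u)) := by
    fun_prop
  rw [← Set.Ioc_union_Ioi_eq_Ioi zero_le_one]
  refine IntegrableOn.union ?_ ?_
  · refine Measure.integrableOn_of_bounded (M := d.factorial / ((d : ℝ) / 2) ^ d)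
      (by simp) hmeas.aestronglyMeasurable ?_
    filter_upwards [ae_restrict_mem measurableSet_Ioc] with u hu
    have hu0 := hu.1
    have hup := Real.rpow_pos_of_pos hu0 (1 - (d : ℝ) / 2)
    rw [Real.norm_of_nonneg (by positivity)]
    have h1 := exp_neg_le_factorial_div (x := (d : ℝ) / 2 / u) (by positivity) d
    have h2 : u ^ (1 - (d : ℝ) / 2) * u ^ d ≤ 1 := by
      rw [← Real.rpow_natCast, ← Real.rpow_add hu0]
      exact Real.rpow_le_one hu0.le hu.2 (by linarith)
    calc _ ≤ u ^ (1 - (d : ℝ) / 2) * (d.factorial / ((d : ℝ) / 2 / u) ^ d) := by gcongr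
      _ = d.factorial / ((d : ℝ) / 2) ^ d * (u ^ (1 - (d : ℝ) / 2) * u ^ d) := by
          rw [div_pow _ u]; field_simp
      _ ≤ d.factorial / ((d : ℝ) / 2) ^ d * 1 := by gcongr
      _ = _ := mul_one _
  · refine Integrable.mono' (integrableOn_Ioi_rpow_of_lt (a := 1 - (d : ℝ) / 2) (c := 1)
      (by linarith) one_pos) hmeas.aestronglyMeasurable ?_
    filter_upwards [ae_restrict_mem measurableSet_Ioi] with u hu
    have hu0 : (0 : ℝ) < u := one_pos.trans hu
    have hup := Real.rpow_pos_of_pos hu0 (1 - (d : ℝ) / 2)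
    rw [Real.norm_of_nonneg (by positivity)]
    refine mul_le_of_le_one_right hup.le (Real.exp_le_one_iff.2 ?_)
    have : 0 ≤ (d : ℝ) / 2 / u := by positivity
    linarith

lemma integral_prof_pos (d : ℕ) (hd : 4 < d) : 0 < ∫ u in Set.Ioi 0, prof d u := by
  rw [setIntegral_pos_iff_support_of_nonneg_ae _ (integrable_prof d hd)]
  · have : Function.support (prof d) ∩ Set.Ioi 0 = Set.Ioi 0 :=
      Set.inter_eq_right.2 fun u hu => (prof_pos d (by lia) hu).ne'
    rw [this]; simp
  · filter_upwards [ae_restrict_mem measurableSet_Ioi] with u hu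
    exact (prof_pos d (by lia) hu).le

lemma heatG_scaling (d : ℕ) (hd : 0 < d) (z : Fin d → ℤ) (hR : 0 < nrmZ d z) {t : ℝ} (ht : 0 < t) :
    t * heatG d z t = nrmZ d z ^ (2 - (d : ℝ)) * prof d ((nrmZ d z ^ 2)⁻¹ * t) := by
  set R := nrmZ d z with hRdef
  have e1 : ((R ^ 2)⁻¹ * t) ^ (1 - (d : ℝ) / 2) = R ^ ((d : ℝ) - 2) * t ^ (1 - (d : ℝ) / 2) := by
    rw [Real.mul_rpow (by positivity) ht.le]
    congr 1
    rw [← Real.rpow_natCast, ← Real.rpow_neg hR.le, ← Real.rpow_mul hR.le]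
    congr 1; push_cast; ring
  have e2 : t ^ (1 - (d : ℝ) / 2) = t * t ^ (-(d : ℝ) / 2) := by
    rw [show 1 - (d : ℝ) / 2 = 1 + -(d : ℝ) / 2 by ring, Real.rpow_add ht, Real.rpow_one]
  have e3 : R ^ (2 - (d : ℝ)) * R ^ ((d : ℝ) - 2) = 1 := by
    rw [← Real.rpow_add hR]; simp
  have e4 : (d : ℝ) / 2 / ((R ^ 2)⁻¹ * t) = (d : ℝ) / 2 * R ^ 2 / t := by field_simp
  rw [heatG_eq d hd z ht, prof, e1, e2, e4, ← hRdef]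
  linear_combination (-(t * (((d : ℝ) / (2 * Real.pi)) ^ ((d : ℝ) / 2) * t ^ (-(d : ℝ) / 2)
      * Real.exp (-((d : ℝ) / 2 * R ^ 2 / t))))) * e3

lemma heatG_integral (d : ℕ) (hd : 4 < d) (z : Fin d → ℤ) (hR : 0 < nrmZ d z) :
    IntegrableOn (fun t => t * heatG d z t) (Set.Ioi 0) ∧
      ∫ t in Set.Ioi 0, t * heatG d z t
        = (∫ u in Set.Ioi 0, prof d u) * nrmZ d z ^ (-((d : ℝ) - 4)) := by
  have hR2 : 0 < (nrmZ d z ^ 2)⁻¹ := by positivity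
  have hcongr : Set.EqOn (fun t => t * heatG d z t)
      (fun t => nrmZ d z ^ (2 - (d : ℝ)) * prof d ((nrmZ d z ^ 2)⁻¹ * t)) (Set.Ioi 0) :=
    fun t ht => heatG_scaling d (by lia) z hR ht
  constructor
  · rw [integrableOn_congr_fun hcongr measurableSet_Ioi]
    refine Integrable.const_mul ?_ _
    have := (integrableOn_Ioi_comp_mul_left_iff (prof d) 0 hR2).2
      (by simpa using integrable_prof d hd)
    exact this
  · rw [setIntegral_congr_fun measurableSet_Ioi hcongr, integral_const_mul,
      integral_comp_mul_left_Ioi _ _ hR2, mul_zero, inv_inv, smul_eq_mul,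
      ← mul_assoc, mul_comm]
    congr 1
    rw [← Real.rpow_natCast, ← Real.rpow_add hR]
    congr 1; push_cast; ring

/-! ### Neighbours of the origin and the three terms of `G` -/

lemma unit_vector (d : ℕ) (e : Fin d → ℤ) (he : nrmZ d e = 1) :
    ∃ i, e = Pi.single i 1 ∨ e = -Pi.single i 1 := by
  have h1 : ∑ i, (e i) ^ 2 = 1 := by
    have := nrmZ_sq d e
    rw [he, one_pow] at this
    exact_mod_cast this.symm
  obtain ⟨i, hi⟩ : ∃ i, e i ≠ 0 := by
    by_contra! h
    simp [h] at h1
  have hi1 : 1 ≤ e i ^ 2 := by have := sq_pos_of_ne_zero hi; lia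
  rw [← Finset.add_sum_erase _ _ (Finset.mem_univ i)] at h1
  have hnn : 0 ≤ ∑ j ∈ Finset.univ.erase i, e j ^ 2 := Finset.sum_nonneg fun _ _ => sq_nonneg _
  have h0 : ∑ j ∈ Finset.univ.erase i, e j ^ 2 = 0 := by lia
  have hj : ∀ j, j ≠ i → e j = 0 := fun j hji => by
    have := (Finset.sum_eq_zero_iff_of_nonneg fun _ _ => sq_nonneg _).1 h0 j
      (Finset.mem_erase.2 ⟨hji, Finset.mem_univ j⟩)
    exact pow_eq_zero_iff two_ne_zero |>.1 this
  refine ⟨i, ?_⟩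
  have hsq : e i = 1 ∨ e i = -1 := by
    have : (e i - 1) * (e i + 1) = 0 := by linarith
    rcases mul_eq_zero.1 this with h | h
    · left; lia
    · right; lia
  rcases hsq with h | h
  · left; ext j; by_cases hji : j = i
    · subst hji; simp [h]
    · simp [hj j hji, hji]
  · right; ext j; by_cases hji : j = i
    · subst hji; simp [h]
    · simp [hj j hji, hji]

/-- The sum over the neighbours is `2d ∑ₖ P(X_{k+1} = z)`. -/
lemma sum_green_neighbours (d : ℕ) (hd : 0 < d) (z : Fin d → ℤ) :
    ∑ i : Fin d, (green d (z - Pi.single i 1) + green d (z + Pi.single i 1))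
      ≤ 2 * d * green d z := by
  have h0 : (2 * d : ENNReal) ≠ 0 := by
    have : (d : ENNReal) ≠ 0 := by exact_mod_cast hd.ne'
    exact mul_ne_zero two_ne_zero this
  have ht : (2 * d : ENNReal) ≠ ⊤ := ENNReal.mul_ne_top (by simp) (by simp)
  have h1 : ∀ k, ∑ i : Fin d, (srwP d k (z - Pi.single i 1) + srwP d k (z + Pi.single i 1))
      = 2 * d * srwP d (k + 1) z := by
    intro k
    rw [srwP, ← mul_assoc, ENNReal.mul_inv_cancel h0 ht, one_mul]
  simp only [green]
  simp only [← ENNReal.tsum_add]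
  rw [← Summable.tsum_finsetSum (fun _ _ => ENNReal.summable)]
  simp only [h1]
  rw [ENNReal.tsum_mul_left]
  refine mul_le_mul_right ?_ _
  exact ENNReal.tsum_comp_le_tsum_of_injective (add_left_injective 1) (fun k => srwP d k z)

lemma neighbour_sum_bound (d : ℕ) (hd : 0 < d) (z : Fin d → ℤ) (hz : green d z ≠ ⊤) :
    |∑' e : Fin d → ℤ, (if nrmZ d e = 1 then (green d (z + e)).toReal else 0)|
      ≤ 2 * d * (green d z).toReal := by
  classical
  set nb : Fin d × Bool → (Fin d → ℤ) :=
    fun p => if p.2 then Pi.single p.1 1 else -Pi.single p.1 1 with hnb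
  have hsupp : ∀ e ∉ Finset.univ.image nb,
      (if nrmZ d e = 1 then (green d (z + e)).toReal else 0) = 0 := by
    intro e he
    rw [if_neg]
    intro h1
    apply he
    obtain ⟨i, h | h⟩ := unit_vector d e h1
    · exact Finset.mem_image.2 ⟨(i, true), Finset.mem_univ _, by simp [hnb, h]⟩
    · exact Finset.mem_image.2 ⟨(i, false), Finset.mem_univ _, by simp [hnb, h]⟩
  rw [tsum_eq_sum hsupp, abs_of_nonneg (Finset.sum_nonneg fun _ _ => by
    split_ifs <;> simp)]
  have hb := sum_green_neighbours d hd z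
  have hfin : 2 * d * green d z ≠ ⊤ :=
    ENNReal.mul_ne_top (ENNReal.mul_ne_top (by simp) (by simp)) hz
  have hf1 : ∑ i : Fin d, (green d (z - Pi.single i 1) + green d (z + Pi.single i 1)) ≠ ⊤ :=
    ne_top_of_le_ne_top hfin hb
  have hf2 : ∀ i : Fin d, green d (z - Pi.single i 1) + green d (z + Pi.single i 1) ≠ ⊤ :=
    fun i => (ENNReal.sum_ne_top.1 hf1) i (Finset.mem_univ i)
  calc _ ≤ ∑ e ∈ Finset.univ.image nb, (green d (z + e)).toReal := by
        refine Finset.sum_le_sum fun e _ => ?_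
        split_ifs <;> simp
    _ ≤ ∑ p : Fin d × Bool, (green d (z + nb p)).toReal :=
        Finset.sum_image_le_of_nonneg fun _ _ => ENNReal.toReal_nonneg
    _ = ∑ i : Fin d, (green d (z - Pi.single i 1) + green d (z + Pi.single i 1)).toReal := by
        rw [Fintype.sum_prod_type]
        refine Finset.sum_congr rfl fun i _ => ?_
        rw [ENNReal.toReal_add (ENNReal.add_ne_top.1 (hf2 i)).1 (ENNReal.add_ne_top.1 (hf2 i)).2]
        simp [hnb, sub_eq_add_neg, add_comm]
    _ = (∑ i : Fin d, (green d (z - Pi.single i 1) + green d (z + Pi.single i 1))).toReal :=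
        (ENNReal.toReal_sum fun i _ => hf2 i).symm
    _ ≤ (2 * d * green d z).toReal := ENNReal.toReal_mono hfin hb
    _ = _ := by simp

/-- The Green's function itself is of the order of the error term. -/
lemma green_bound (d : ℕ) (hd : 4 < d) (ε : ℝ) (hε : 0 < ε) : ∃ C : ℝ, 0 ≤ C ∧
    ∀ z : Fin d → ℤ, 1 ≤ nrmZ d z →
      green d z ≤ ENNReal.ofReal (C * nrmZ d z ^ (2 - (d : ℝ) + ε)) := by
  obtain ⟨N, hN, h⟩ := split_bound d (by lia) ε hε
  obtain ⟨C₁, hC₁, h₁⟩ := ctK_decay d (by lia) N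
  obtain ⟨C₂, hC₂, h₂⟩ := local_limit d (by lia)
  obtain ⟨C, hC, hb⟩ := h C₁ C₂ hC₁.le hC₂.le
  refine ⟨C, hC, fun z hz => ?_⟩
  rw [green_eq_lintegral d (by lia)]
  refine hb _ _ hz (fun t ht => (h₁ z t (by linarith) ht).trans ?_) (fun t ht => (h₂ z t ht).1)
  gcongr
  nlinarith

/-- `g ⋆ g = ∫ t · ctK` differs from `∫ t · heatG` by at most `∫ t |ctK - heatG|`, to which
`split_bound` applies. -/
lemma conv_bound (d : ℕ) (hd : 4 < d) (ε : ℝ) (hε : 0 < ε) : ∃ C : ℝ, 0 ≤ C ∧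
    ∀ z : Fin d → ℤ, 1 ≤ nrmZ d z →
      |(convE d (green d) (green d) z).toReal
        - (∫ u in Set.Ioi 0, prof d u) * nrmZ d z ^ (-((d : ℝ) - 4))|
        ≤ C * nrmZ d z ^ (2 - (d : ℝ) + ε) := by
  obtain ⟨N, hN, h⟩ := split_bound d (by lia) ε hε
  obtain ⟨C₁, hC₁, h₁⟩ := ctK_decay d (by lia) N
  obtain ⟨C₃, hC₃, h₃⟩ := heatG_decay d (by lia) N hN
  obtain ⟨C₂, hC₂, h₂⟩ := local_limit d (by lia)
  obtain ⟨C, hC, hb⟩ := h (C₁ + C₃) C₂ (by positivity) hC₂.le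
  refine ⟨C, hC, fun z hz => ?_⟩
  have hR : 0 < nrmZ d z := by linarith
  have hbz := hb (nrmZ d z) (fun t => t * |ctK d z t - heatG d z t|) hz
    (fun t ht => by
      have ha : |ctK d z t - heatG d z t| ≤ (C₁ + C₃) * ((1 + t) / nrmZ d z ^ 2) ^ N := by
        have h4 := h₁ z t hR ht
        have h5 := h₃ z t hR ht
        have h6 := ctK_nonneg d z ht.le
        have h7 := heatG_nonneg d z t
        rw [add_mul]
        exact abs_le.2 ⟨by linarith, by linarith⟩
      calc t * |ctK d z t - heatG d z t|
          ≤ (1 + t) * ((C₁ + C₃) * ((1 + t) / nrmZ d z ^ 2) ^ N) := by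
            gcongr; linarith
        _ = _ := by ring)
    (fun t ht => (h₂ z t ht).2)
  obtain ⟨hGi, hGe⟩ := heatG_integral d hd z hR
  have hm : AEMeasurable (fun t => t * ctK d z t) (volume.restrict (Set.Ioi 0)) :=
    aemeasurable_id.mul (measurable_ctK d (by lia) z)
  set E : ℝ → ℝ := fun t => t * ctK d z t - t * heatG d z t with hE
  have hEm : AEStronglyMeasurable E (volume.restrict (Set.Ioi 0)) :=
    hm.aestronglyMeasurable.sub hGi.aestronglyMeasurable
  have hEn : ∫⁻ t in Set.Ioi (0 : ℝ), ENNReal.ofReal ‖E t‖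
      = ∫⁻ t in Set.Ioi (0 : ℝ), ENNReal.ofReal (t * |ctK d z t - heatG d z t|) := by
    refine setLIntegral_congr_fun measurableSet_Ioi fun t ht => ?_
    have ht' : (0 : ℝ) < t := ht
    simp only [hE]
    rw [← mul_sub, Real.norm_eq_abs, abs_mul, abs_of_pos ht']
  rw [← hEn] at hbz
  have hEi : IntegrableOn E (Set.Ioi 0) := by
    refine ⟨hEm, ?_⟩
    rw [hasFiniteIntegral_iff_norm]
    exact hbz.trans_lt ENNReal.ofReal_lt_top
  have hqi : IntegrableOn (fun t => t * ctK d z t) (Set.Ioi 0) := by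
    have := hEi.add hGi
    refine this.congr_fun (fun t _ => ?_) measurableSet_Ioi
    simp [hE]
  have hconv : (convE d (green d) (green d) z).toReal = ∫ t in Set.Ioi 0, t * ctK d z t := by
    rw [convE_green_eq_lintegral d (by lia), integral_eq_lintegral_of_nonneg_ae _
      hm.aestronglyMeasurable]
    filter_upwards [ae_restrict_mem measurableSet_Ioi] with t ht
    exact mul_nonneg (le_of_lt ht) (ctK_nonneg d z (le_of_lt ht))
  rw [hconv, ← hGe, ← integral_sub hqi hGi, ← Real.norm_eq_abs]
  have hnn : 0 ≤ C * nrmZ d z ^ (2 - (d : ℝ) + ε) :=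
    mul_nonneg hC (Real.rpow_nonneg hR.le _)
  refine (norm_integral_le_lintegral_norm _).trans ?_
  exact ENNReal.toReal_le_of_le_ofReal hnn hbz

/-- For `d > 4` there is a constant `c_G > 0` (depending only on `d` and `σ²`)
such that for every `ε > 0`, `G(z) = c_G ‖z‖^{-(d-4)} + o(‖z‖^{-(d-2-ε)})` as `‖z‖ → ∞`. -/
theorem greens_function_asymptotics (d : ℕ) (hd : 4 < d) (σ2 : ℝ) (hσ : 0 < σ2) :
    ∃ cG : ℝ, 0 < cG ∧ ∀ ε : ℝ, 0 < ε →
      Tendsto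
        (fun z : Fin d → ℤ =>
          nrmZ d z ^ ((d : ℝ) - 2 - ε) *
            (Gfun d σ2 z - cG * nrmZ d z ^ (-((d : ℝ) - 4))))
        (Filter.comap (nrmZ d) atTop) (nhds 0) := by
  set c₀ : ℝ := ∫ u in Set.Ioi 0, prof d u with hc₀
  have hc₀pos : 0 < c₀ := integral_prof_pos d hd
  have hd' : (4 : ℝ) < d := by exact_mod_cast hd
  refine ⟨σ2 / 2 * c₀, by positivity, fun ε hε => ?_⟩
  obtain ⟨K, hK, hconv⟩ := conv_bound d hd (ε / 2) (half_pos hε)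
  obtain ⟨L, hL, hgreen⟩ := green_bound d hd (ε / 2) (half_pos hε)
  set M : ℝ := σ2 / 2 * K + |1 - σ2 / 2| * L + |1 - σ2 / 2| * L with hM
  have hbound : ∀ z : Fin d → ℤ, 1 ≤ nrmZ d z →
      |Gfun d σ2 z - σ2 / 2 * c₀ * nrmZ d z ^ (-((d : ℝ) - 4))|
        ≤ M * nrmZ d z ^ (2 - (d : ℝ) + ε / 2) := by
    intro z hz
    set P := nrmZ d z ^ (2 - (d : ℝ) + ε / 2) with hP
    have hPnn : 0 ≤ P := Real.rpow_nonneg (by linarith) _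
    have hg := ENNReal.toReal_le_of_le_ofReal (mul_nonneg hL hPnn) (hgreen z hz)
    have hgfin : green d z ≠ ⊤ := ne_top_of_le_ne_top ENNReal.ofReal_ne_top (hgreen z hz)
    have hS := neighbour_sum_bound d (by lia) z hgfin
    have hc := hconv z hz
    have hgnn : 0 ≤ (green d z).toReal := ENNReal.toReal_nonneg
    unfold Gfun
    set S := ∑' e : Fin d → ℤ, (if nrmZ d e = 1 then (green d (z + e)).toReal else 0)
    have hS' : |1 / (2 * (d : ℝ)) * S| ≤ L * P := by
      rw [abs_mul, abs_of_nonneg (by positivity)]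
      calc 1 / (2 * (d : ℝ)) * |S| ≤ 1 / (2 * (d : ℝ)) * (2 * d * (green d z).toReal) := by gcongr
        _ = (green d z).toReal := by field_simp
        _ ≤ _ := hg
    have e : σ2 / 2 * (convE d (green d) (green d) z).toReal + (1 - σ2 / 2) * (green d z).toReal
        + (1 - σ2 / 2) * (1 / (2 * (d : ℝ))) * S - σ2 / 2 * c₀ * nrmZ d z ^ (-((d : ℝ) - 4))
        = σ2 / 2 * ((convE d (green d) (green d) z).toReal - c₀ * nrmZ d z ^ (-((d : ℝ) - 4)))
          + (1 - σ2 / 2) * (green d z).toReal + (1 - σ2 / 2) * (1 / (2 * (d : ℝ)) * S) := by ring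
    rw [e]
    refine (abs_add_three _ _ _).trans ?_
    rw [abs_mul, abs_mul, abs_mul, abs_of_pos (half_pos hσ), abs_of_nonneg hgnn]
    calc _ ≤ σ2 / 2 * (K * P) + |1 - σ2 / 2| * (L * P) + |1 - σ2 / 2| * (L * P) := by gcongr
      _ = _ := by rw [hM]; ring
  have hlim : Tendsto (fun z : Fin d → ℤ => M * nrmZ d z ^ (-(ε / 2)))
      (Filter.comap (nrmZ d) atTop) (nhds 0) := by
    have := ((tendsto_rpow_neg_atTop (half_pos hε)).const_mul M).comp
      (tendsto_comap (f := nrmZ d) (x := atTop))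
    simpa [Function.comp_def] using this
  refine squeeze_zero_norm' ?_ hlim
  have hev : ∀ᶠ z in Filter.comap (nrmZ d) atTop, 1 ≤ nrmZ d z :=
    tendsto_comap.eventually (eventually_ge_atTop 1)
  filter_upwards [hev] with z hz
  have hR : 0 < nrmZ d z := by linarith
  rw [norm_mul, Real.norm_eq_abs, Real.norm_eq_abs, abs_of_pos (Real.rpow_pos_of_pos hR _)]
  calc _ ≤ nrmZ d z ^ ((d : ℝ) - 2 - ε) * (M * nrmZ d z ^ (2 - (d : ℝ) + ε / 2)) :=
        mul_le_mul_of_nonneg_left (hbound z hz) (Real.rpow_pos_of_pos hR _).le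
    _ = M * nrmZ d z ^ (-(ε / 2)) := by
        rw [mul_left_comm, ← Real.rpow_add hR]
        congr 2; ring
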